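/- Let D = {M_i, π_{i,j} | i,j ∈ D and i ≤ j} be a well-founded directed system of models of set theory with direct limit M_∞ and direct limit maps π_{i,∞} : M_i → M_∞. Let X be a bounded subset of M_∞. Suppose that the D-indexed family {π_{i,∞}⁻¹[X] | i ∈ D} is uniformly definable over D. Then X ∈ M_∞. -/

import Mathlib

/- ## A framework for transitive class/set models of fragments of ZFC,
     inside the universe `ZFSet` of ZF sets. -/

open FirstOrder FirstOrder.Language

/-- The language of set theory: a single binary relation symbol `∈`. -/
inductive SetRelSym : ℕ → Type
  | mem : SetRelSym 2

/-- The first-order language of set theory. -/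
def setL : FirstOrder.Language := ⟨fun _ => Empty, SetRelSym⟩

/-- Evaluation of a term of the language of set theory (terms are just variables). -/
def tval {n : ℕ} (v : Fin n → ZFSet) : setL.Term (Empty ⊕ Fin n) → ZFSet
  | .var (Sum.inl e) => e.elim
  | .var (Sum.inr i) => v i
  | .func f _ => f.elim

/-- Tarskian satisfaction of a formula of the language of set theory in a class `S` of
ZF-sets (equipped with true membership), under the assignment `v`. -/
def ZSat (S : Set ZFSet) : ∀ {n : ℕ}, setL.BoundedFormula Empty n → (Fin n → ZFSet) → Prop
  | _, .falsum, _ => False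
  | _, .equal t u, v => tval v t = tval v u
  | _, .rel R ts, v =>
      match R with
      | SetRelSym.mem => tval v (ts 0) ∈ tval v (ts 1)
  | _, .imp φ ψ, v => ZSat S φ v → ZSat S ψ v
  | _, .all φ, v => ∀ x ∈ S, ZSat S φ (Fin.snoc v x)

/-- Satisfaction of a sentence in a class of ZF-sets. -/
def SatS (S : Set ZFSet) (σ : setL.Sentence) : Prop := ZSat S σ finZeroElim

/-- A class of ZF-sets is transitive. -/
def IsTransClass (S : Set ZFSet) : Prop := ∀ x ∈ S, ∀ y ∈ x, y ∈ S

/-- `r` is a well-ordering of the set `x`, from the point of view of the class `S`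
(Kuratowski pairs code the relation; minimality is required for nonempty subsets of `x`
lying in `S`). -/
def WellOrders (S : Set ZFSet) (r x : ZFSet) : Prop :=
  (∀ a ∈ x, ZFSet.pair a a ∉ r) ∧
  (∀ a ∈ x, ∀ b ∈ x, ∀ c ∈ x, ZFSet.pair a b ∈ r → ZFSet.pair b c ∈ r → ZFSet.pair a c ∈ r) ∧
  (∀ a ∈ x, ∀ b ∈ x, a ≠ b → (ZFSet.pair a b ∈ r ∨ ZFSet.pair b a ∈ r)) ∧
  (∀ y ∈ S, (∀ z ∈ y, z ∈ x) → y ≠ ∅ → ∃ m ∈ y, ∀ z ∈ y, ZFSet.pair z m ∉ r)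

/-- `S` is a transitive model of ZFC⁻, i.e. of ZFC stated with the Replacement Scheme and
the Well-Ordering Theorem but without the Power Set Axiom.  (Extensionality and Foundation
are automatic for transitive classes of ZF-sets.) -/
def ModelsZFCminus (S : Set ZFSet) : Prop :=
  IsTransClass S ∧
  (∅ : ZFSet) ∈ S ∧
  (∀ x ∈ S, ∀ y ∈ S, ({x, y} : ZFSet) ∈ S) ∧
  (∀ x ∈ S, (ZFSet.sUnion x : ZFSet) ∈ S) ∧
  ZFSet.omega ∈ S ∧
  (∀ (n : ℕ) (φ : setL.BoundedFormula Empty (n + 1)) (p : Fin n → ZFSet),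
    (∀ i, p i ∈ S) → ∀ a ∈ S, ∃ b ∈ S, ∀ y, y ∈ b ↔ (y ∈ a ∧ ZSat S φ (Fin.snoc p y))) ∧
  (∀ (n : ℕ) (φ : setL.BoundedFormula Empty (n + 2)) (p : Fin n → ZFSet),
    (∀ i, p i ∈ S) → ∀ a ∈ S,
      (∀ x ∈ a, ∃! y, y ∈ S ∧ ZSat S φ (Fin.snoc (Fin.snoc p x) y)) →
      ∃ b ∈ S, ∀ y, y ∈ b ↔ ∃ x ∈ a, y ∈ S ∧ ZSat S φ (Fin.snoc (Fin.snoc p x) y)) ∧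
  (∀ x ∈ S, ∃ r ∈ S, WellOrders S r x)

/-- `S` is a transitive model of ZFC. -/
def ModelsZFC (S : Set ZFSet) : Prop :=
  ModelsZFCminus S ∧ ∀ x ∈ S, ∃ p ∈ S, ∀ y, y ∈ p ↔ (y ∈ S ∧ y ⊆ x)

/-- `f` is (the graph of) a surjection of `a` onto `b`. -/
def SurjFun (f a b : ZFSet) : Prop :=
  ZFSet.IsFunc a b f ∧ ∀ y ∈ b, ∃ x ∈ a, ZFSet.pair x y ∈ f

/-- `f` is (the graph of) an injection of `a` into `b`. -/
def InjFun (f a b : ZFSet) : Prop :=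
  ZFSet.IsFunc a b f ∧ ∀ x ∈ a, ∀ x' ∈ a, ∀ y, ZFSet.pair x y ∈ f → ZFSet.pair x' y ∈ f → x = x'

/-- `f` is (the graph of) a cofinal function from `β` into the ordinal `α`. -/
def CofinalFun (f β α : ZFSet) : Prop :=
  ZFSet.IsFunc β α f ∧ ∀ ξ ∈ α, ∃ η ∈ β, ∃ ζ, ZFSet.pair η ζ ∈ f ∧ (ξ ∈ ζ ∨ ξ = ζ)

/-- `μ = cof(α)` as computed inside the class `S` (for `S = Set.univ`, the true cofinality). -/
def IsCofOf (S : Set ZFSet) (α μ : ZFSet) : Prop :=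
  μ ∈ S ∧ μ.IsOrdinal ∧ (∃ f ∈ S, CofinalFun f μ α) ∧
  ∀ ν ∈ S, ZFSet.IsOrdinal ν → (∃ f ∈ S, CofinalFun f ν α) → μ ⊆ ν

/-- `κ` is a cardinal from the point of view of the class `S`
(for `S = Set.univ`, a true cardinal). -/
def IsCardIn (S : Set ZFSet) (κ : ZFSet) : Prop :=
  κ.IsOrdinal ∧ ∀ α ∈ κ, ∀ f ∈ S, ¬ SurjFun f α κ

/-- `μ` is an (infinite) regular cardinal from the point of view of the class `S`. -/
def IsRegularIn (S : Set ZFSet) (μ : ZFSet) : Prop :=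
  ZFSet.omega ⊆ μ ∧ IsCardIn S μ ∧ IsCofOf S μ μ

/-- `ν = μ⁺`, the cardinal successor of `μ`, as computed in the class `S`. -/
def CardSuccIn (S : Set ZFSet) (μ ν : ZFSet) : Prop :=
  ν ∈ S ∧ IsCardIn S ν ∧ μ ∈ ν ∧ ∀ ξ ∈ S, IsCardIn S ξ → μ ∈ ξ → ν ⊆ ξ

/-- `μ` is the largest cardinal of the model `S`. -/
def IsLargestCardIn (S : Set ZFSet) (μ : ZFSet) : Prop :=
  μ ∈ S ∧ IsCardIn S μ ∧ ∀ x ∈ S, IsCardIn S x → x ⊆ μ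

/-- `α = sup A`, for `A` a collection of ordinals: `α` is the least ordinal above all of them. -/
def IsSupOf (α : ZFSet) (A : Set ZFSet) : Prop :=
  α.IsOrdinal ∧ (∀ a ∈ A, a ⊆ α) ∧ ∀ β : ZFSet, β.IsOrdinal → (∀ a ∈ A, a ⊆ β) → α ⊆ β

/-- `π` is an elementary embedding (for the language of set theory) from the class `S`
into the class `T`. -/
def IsElem (S T : Set ZFSet) (π : ZFSet → ZFSet) : Prop :=
  (∀ x ∈ S, π x ∈ T) ∧
  ∀ (n : ℕ) (φ : setL.BoundedFormula Empty n) (v : Fin n → ZFSet),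
    (∀ i, v i ∈ S) → (ZSat S φ v ↔ ZSat T φ (fun i => π (v i)))

/-- A directed system of models of set theory: a directed partial order `ι`, transitive
(set) models `M i` of ZFC, and commuting elementary embeddings `pi i j : M i → M j`. -/
structure DirSystem.{u_1} (ι : Type) [PartialOrder ι] where
  M : ι → ZFSet.{u_1}
  pi : ι → ι → ZFSet → ZFSet
  directed : ∀ i j : ι, ∃ k, i ≤ k ∧ j ≤ k
  zfc : ∀ i, ModelsZFC (M i).toSet
  elem : ∀ i j, i ≤ j → IsElem (M i).toSet (M j).toSet (pi i j)
  map_id : ∀ i, ∀ x ∈ M i, pi i i x = x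
  map_comp : ∀ i j k, i ≤ j → j ≤ k → ∀ x ∈ M i, pi j k (pi i j x) = pi i k x

/-- `limit` (a transitive class) together with the maps `e i : M i → limit` is the
(transitivized) direct limit of the well-founded directed system `D`: the maps are
elementary, commute with the system maps, and every element of the limit is in the
range of some `e i`. -/
structure IsDirLimit {ι : Type} [PartialOrder ι] (D : DirSystem ι)
    (limit : Set ZFSet) (e : ι → ZFSet → ZFSet) : Prop where
  trans : IsTransClass limit
  elem : ∀ i, IsElem (D.M i).toSet limit (e i)
  compat : ∀ i j, i ≤ j → ∀ x ∈ D.M i, e j (D.pi i j x) = e i x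
  exhaust : ∀ y ∈ limit, ∃ i, ∃ x ∈ D.M i, e i x = y

/-- The `A`-indexed family of unary relations (sets) `R i` is uniformly definable over the
directed system `D`: some formula `φ(v, u)` with a parameter `a ∈ M i` (moved along by the
system maps) defines `R j` over `M j` for all `j ≥ i`. -/
def UnifDef1 {ι : Type} [PartialOrder ι] (D : DirSystem ι) (A : Set ι)
    (R : ι → Set ZFSet) : Prop :=
  ∃ i ∈ A, ∃ a, a ∈ D.M i ∧ ∃ φ : setL.BoundedFormula Empty 2,
    ∀ j, i ≤ j → j ∈ A ∧ (∀ x ∈ R j, x ∈ D.M j) ∧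
      ∀ x, x ∈ D.M j → (x ∈ R j ↔ ZSat (D.M j).toSet φ ![x, D.pi i j a])

/-- The family of binary relations `R i` is uniformly definable over the directed system `D`. -/
def UnifDef2 {ι : Type} [PartialOrder ι] (D : DirSystem ι)
    (R : ι → ZFSet → ZFSet → Prop) : Prop :=
  ∃ i, ∃ a, a ∈ D.M i ∧ ∃ φ : setL.BoundedFormula Empty 3,
    ∀ j, i ≤ j → (∀ x y, R j x y → x ∈ D.M j ∧ y ∈ D.M j) ∧
      ∀ x, x ∈ D.M j → ∀ y, y ∈ D.M j →
        (R j x y ↔ ZSat (D.M j).toSet φ ![x, y, D.pi i j a])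

def renT {n m : ℕ} (f : Fin n → Fin m) :
    setL.Term (Empty ⊕ Fin n) → setL.Term (Empty ⊕ Fin m)
  | .var (Sum.inl e) => e.elim
  | .var (Sum.inr i) => .var (Sum.inr (f i))
  | .func f _ => f.elim

theorem tval_renT {n m : ℕ} (f : Fin n → Fin m) (t : setL.Term (Empty ⊕ Fin n))
    (v : Fin m → ZFSet) : tval v (renT f t) = tval (v ∘ f) t := by
  match t with
  | .var (Sum.inl e) => exact e.elim
  | .var (Sum.inr i) => rfl
  | .func f _ => exact f.elim

def renF : ∀ {n m : ℕ}, (Fin n → Fin m) → setL.BoundedFormula Empty n →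
    setL.BoundedFormula Empty m
  | _, _, _, .falsum => .falsum
  | _, _, f, .equal t u => .equal (renT f t) (renT f u)
  | _, _, f, .rel R ts => .rel R (fun i => renT f (ts i))
  | _, _, f, .imp φ ψ => .imp (renF f φ) (renF f ψ)
  | _, m, f, .all φ => .all (renF (Fin.snoc (α := fun _ => Fin (m+1))
      (fun i => (f i).castSucc) (Fin.last m)) φ)

theorem zsat_renF (S : Set ZFSet) {n : ℕ} (φ : setL.BoundedFormula Empty n) :
    ∀ {m : ℕ} (f : Fin n → Fin m) (v : Fin m → ZFSet),
      ZSat S (renF f φ) v ↔ ZSat S φ (v ∘ f) := by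
  induction φ with
  | falsum => intro m f v; rfl
  | equal t u => intro m f v; simp only [renF, ZSat, tval_renT]
  | rel R ts =>
    intro m f v
    cases R
    simp only [renF, ZSat, tval_renT]
  | imp φ ψ ih1 ih2 => intro m f v; simp only [renF, ZSat, ih1, ih2]
  | all φ ih =>
    intro m f v
    simp only [renF, ZSat, ih]
    refine forall₂_congr fun x _ => ?_
    refine iff_of_eq (congrArg _ ?_)
    funext i
    refine Fin.lastCases ?_ (fun i => ?_) i <;> simp

def memF {n : ℕ} (i j : Fin n) : setL.BoundedFormula Empty n :=
  .rel (l := 2) SetRelSym.mem ![.var (Sum.inr i), .var (Sum.inr j)]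

theorem zsat_memF (S : Set ZFSet) {n : ℕ} (i j : Fin n) (v : Fin n → ZFSet) :
    ZSat S (memF i j) v ↔ v i ∈ v j := Iff.rfl

theorem elem_mem {S T : Set ZFSet} {p : ZFSet → ZFSet} (h : IsElem S T p) {x y : ZFSet}
    (hx : x ∈ S) (hy : y ∈ S) : x ∈ y ↔ p x ∈ p y := by
  have := h.2 2 (memF 0 1) ![x, y] (by intro i; fin_cases i <;> simpa)
  simpa [zsat_memF] using this

theorem zsat_ren32 (φ : setL.BoundedFormula Empty 2) (U : Set ZFSet) (v : Fin 3 → ZFSet)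
    (y : ZFSet) :
    ZSat U (renF (![3, 2] : Fin 2 → Fin 4) φ) (Fin.snoc v y) ↔ ZSat U φ ![y, v 2] := by
  rw [zsat_renF]
  refine iff_of_eq (congrArg _ ?_)
  funext i
  fin_cases i <;> rfl

theorem elem_sep {S T : Set ZFSet} {p : ZFSet → ZFSet} (h : IsElem S T p)
    (φ : setL.BoundedFormula Empty 2) {a b c : ZFSet}
    (ha : a ∈ S) (hb : b ∈ S) (hc : c ∈ S)
    (H : ∀ y ∈ S, y ∈ c ↔ (y ∈ b ∧ ZSat S φ ![y, a])) :
    ∀ y ∈ T, y ∈ p c ↔ (y ∈ p b ∧ ZSat T φ ![y, p a]) := by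
  have hv : ∀ i, (![c, b, a] : Fin 3 → ZFSet) i ∈ S := by
    intro i; fin_cases i <;> simpa
  have h1 := (h.2 3 (.all (.imp (memF 3 (Fin.castSucc 0)) (memF 3 (Fin.castSucc 1))))
    ![c, b, a] hv).1 (by
      exact fun y hy hyc => ((H y hy).1 hyc).1)
  have h2 := (h.2 3 (.all (.imp (memF 3 (Fin.castSucc 0)) (renF ![3, 2] φ)))
    ![c, b, a] hv).1 (by
      exact fun y hy hyc => (zsat_ren32 φ S ![c, b, a] y).2 ((H y hy).1 hyc).2)
  have h3 := (h.2 3 (.all (.imp (memF 3 (Fin.castSucc 1))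
    (.imp (renF ![3, 2] φ) (memF 3 (Fin.castSucc 0)))))
    ![c, b, a] hv).1 (by
      exact fun y hy hyb hp => (H y hy).2 ⟨hyb, (zsat_ren32 φ S ![c, b, a] y).1 hp⟩)
  exact fun y hy => ⟨fun hc => ⟨h1 y hy hc, (zsat_ren32 φ T _ y).1 (h2 y hy hc)⟩,
    fun hh => h3 y hy hh.1 ((zsat_ren32 φ T _ y).2 hh.2)⟩

/-- Let `D` be a well-founded directed system of models of set theory with
(transitivized) direct limit `limit` and direct limit maps `e i`.  Let `X` be a bounded
subset of the limit (i.e. `X ⊆ y₀` for some `y₀` in the limit).  If the family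
`{e i ⁻¹[X] | i ∈ D}` is uniformly definable over `D`, then `X ∈ limit`. -/
theorem definability_lemma {ι : Type} [PartialOrder ι] (D : DirSystem ι)
    (limit : Set ZFSet) (e : ι → ZFSet → ZFSet) (hlim : IsDirLimit D limit e)
    (X : Set ZFSet)
    (y₀ : ZFSet) (hy₀ : y₀ ∈ limit) (hbdd : ∀ x ∈ X, x ∈ y₀)
    (hdef : UnifDef1 D Set.univ (fun i => {y : ZFSet | y ∈ D.M i ∧ e i y ∈ X})) :
    ∃ x ∈ limit, ∀ y : ZFSet, y ∈ x ↔ y ∈ X := by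
  obtain ⟨i₀, -, a, ha, φ, hφ⟩ := hdef
  obtain ⟨i₁, b₀, hb₀, rfl⟩ := hlim.exhaust y₀ hy₀
  obtain ⟨k, hk0, hk1⟩ := D.directed i₀ i₁
  have ha' : D.pi i₀ k a ∈ D.M k := (D.elem i₀ k hk0).1 a ha
  have hb' : D.pi i₁ k b₀ ∈ D.M k := (D.elem i₁ k hk1).1 b₀ hb₀
  obtain ⟨-, -, -, -, -, hsep, -, -⟩ := (D.zfc k).1
  obtain ⟨c, hc, hcb⟩ := hsep 1 (renF ![1, 0] φ) ![D.pi i₀ k a]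
    (by intro i; fin_cases i; exact ha') _ hb'
  have hcM : c ∈ D.M k := hc
  have H : ∀ y ∈ (D.M k).toSet, y ∈ c ↔
      (y ∈ D.pi i₁ k b₀ ∧ ZSat (D.M k).toSet φ ![y, D.pi i₀ k a]) := by
    intro y _
    rw [hcb y, zsat_renF]
    refine and_congr Iff.rfl (iff_of_eq (congrArg _ ?_))
    funext i
    fin_cases i <;> rfl
  have key : ∀ y ∈ limit, y ∈ e k c ↔ y ∈ X := by
    intro y hy
    obtain ⟨j₀, z₀, hz₀, rfl⟩ := hlim.exhaust y hy
    obtain ⟨j, hj0, hkj⟩ := D.directed j₀ k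
    have hz : D.pi j₀ j z₀ ∈ D.M j := (D.elem j₀ j hj0).1 z₀ hz₀
    rw [← hlim.compat j₀ j hj0 z₀ hz₀, ← hlim.compat k j hkj c hcM]
    generalize D.pi j₀ j z₀ = z at hz
    have hcj : D.pi k j c ∈ D.M j := (D.elem k j hkj).1 c hc
    have hbj : D.pi k j (D.pi i₁ k b₀) ∈ D.M j := (D.elem k j hkj).1 _ hb'
    rw [← elem_mem (hlim.elem j) hz hcj, elem_sep (D.elem k j hkj) φ ha' hb' hc H z hz,
      D.map_comp i₀ k j hk0 hkj a ha, ← ((hφ j (hk0.trans hkj)).2.2 z hz),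
      elem_mem (hlim.elem j) hz hbj, hlim.compat k j hkj _ hb', hlim.compat i₁ k hk1 _ hb₀]
    exact ⟨fun h => h.2.2, fun h => ⟨hbdd _ h, hz, h⟩⟩
  refine ⟨e k c, (hlim.elem k).1 c hc, fun y => ⟨fun h => ?_, fun h => ?_⟩⟩
  · exact (key y (hlim.trans _ ((hlim.elem k).1 c hc) y h)).1 h
  · exact (key y (hlim.trans _ hy₀ y (hbdd y h))).2 h
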